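/- Fix real numbers λ > 0, a and E, and for each ε > 0 define Denom(ε) = a²(λε − 1)² + 4λ² + a⁴ε², A(ε) = E(a(λε − 1) − a³ε²)/Denom(ε), and B(ε) = Eλ(a²ε² + 2)/Denom(ε). Then there exists a constant K ≥ 0 such that for every ε ∈ (0, 1] and every t ∈ ℝ, | (A(ε) + aE/(a² + 4λ²)) · cos(at) + (B(ε) − 2λE/(a² + 4λ²)) · sin(at) | ≤ K · ε. In other words, the pointwise error between the periodic invariant parts of the slow mean of the microscopic model and of the approximate macroscopic model decreases (at least) linearly in the small-scale parameter ε, uniformly in time; in particular A(ε) → −aE/(a² + 4λ²) and B(ε) → 2λE/(a² + 4λ²) as ε → 0⁺. -/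

import Mathlib

open Real Filter Topology

/-- The pointwise error between the periodic invariant parts of the slow mean of the
microscopic model and of the approximate macroscopic model decreases (at least) linearly
in the small-scale parameter `ε`, uniformly in time; in particular
`A(ε) → −aE/(a² + 4λ²)` and `B(ε) → 2λE/(a² + 4λ²)` as `ε → 0⁺`. -/
theorem modeling_error_linear_in_epsilon
    (lam a E : ℝ) (hlam : 0 < lam)
    (Denom A B : ℝ → ℝ)
    (hDenom : ∀ ε, Denom ε = a ^ 2 * (lam * ε - 1) ^ 2 + 4 * lam ^ 2 + a ^ 4 * ε ^ 2)
    (hA : ∀ ε, A ε = E * (a * (lam * ε - 1) - a ^ 3 * ε ^ 2) / Denom ε)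
    (hB : ∀ ε, B ε = E * lam * (a ^ 2 * ε ^ 2 + 2) / Denom ε) :
    (∃ K : ℝ, 0 ≤ K ∧ ∀ ε ∈ Set.Ioc (0 : ℝ) 1, ∀ t : ℝ,
      |(A ε + a * E / (a ^ 2 + 4 * lam ^ 2)) * Real.cos (a * t)
        + (B ε - 2 * lam * E / (a ^ 2 + 4 * lam ^ 2)) * Real.sin (a * t)| ≤ K * ε) ∧
    Tendsto A (𝓝[>] 0) (𝓝 (-(a * E / (a ^ 2 + 4 * lam ^ 2)))) ∧
    Tendsto B (𝓝[>] 0) (𝓝 (2 * lam * E / (a ^ 2 + 4 * lam ^ 2))) := by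
  have hD0 : 0 < a ^ 2 + 4 * lam ^ 2 := by positivity
  have hD : ∀ ε, 0 < Denom ε := by
    intro ε
    rw [hDenom]
    positivity
  have hDc : Continuous Denom := by
    rw [funext hDenom]
    fun_prop
  have hAc : Continuous A := by
    rw [funext hA]
    exact Continuous.div (by fun_prop) hDc (fun ε => (hD ε).ne')
  have hBc : Continuous B := by
    rw [funext hB]
    exact Continuous.div (by fun_prop) hDc (fun ε => (hD ε).ne')
  refine ⟨?_, ?_, ?_⟩
  · obtain ⟨f, hf⟩ : ∃ f : ℝ → ℝ, f = fun ε => E * ((a * lam - a ^ 3 * ε) * (a ^ 2 + 4 * lam ^ 2)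
        + a * (a ^ 2 * (lam ^ 2 * ε - 2 * lam) + a ^ 4 * ε)) / (Denom ε * (a ^ 2 + 4 * lam ^ 2)) :=
      ⟨_, rfl⟩
    obtain ⟨g, hg⟩ : ∃ g : ℝ → ℝ, g = fun ε => E * lam * (a ^ 2 * ε * (a ^ 2 + 4 * lam ^ 2)
        - 2 * (a ^ 2 * (lam ^ 2 * ε - 2 * lam) + a ^ 4 * ε)) / (Denom ε * (a ^ 2 + 4 * lam ^ 2)) :=
      ⟨_, rfl⟩
    have hfc : Continuous f := by
      rw [hf]
      exact Continuous.div (by fun_prop) (by fun_prop) (fun ε => (mul_pos (hD ε) hD0).ne')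
    have hgc : Continuous g := by
      rw [hg]
      exact Continuous.div (by fun_prop) (by fun_prop) (fun ε => (mul_pos (hD ε) hD0).ne')
    have hAf : ∀ ε, A ε + a * E / (a ^ 2 + 4 * lam ^ 2) = ε * f ε := by
      intro ε
      have h1 := (hD ε).ne'
      have h2 := hD0.ne'
      rw [hA, hf]
      field_simp
      rw [hDenom]
      ring
    have hBg : ∀ ε, B ε - 2 * lam * E / (a ^ 2 + 4 * lam ^ 2) = ε * g ε := by
      intro ε
      have h1 := (hD ε).ne'
      have h2 := hD0.ne'
      rw [hB, hg]
      field_simp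
      rw [hDenom]
      ring
    obtain ⟨K, hK⟩ := (isCompact_Icc (a := (0 : ℝ)) (b := 1)).exists_bound_of_continuousOn
      hfc.continuousOn
    obtain ⟨L, hL⟩ := (isCompact_Icc (a := (0 : ℝ)) (b := 1)).exists_bound_of_continuousOn
      hgc.continuousOn
    have hK0 : 0 ≤ K := (norm_nonneg _).trans (hK 0 (by simp))
    have hL0 : 0 ≤ L := (norm_nonneg _).trans (hL 0 (by simp))
    refine ⟨K + L, by positivity, ?_⟩
    intro ε hε t
    have h1 : |f ε| ≤ K := hK ε ⟨hε.1.le, hε.2⟩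
    have h2 : |g ε| ≤ L := hL ε ⟨hε.1.le, hε.2⟩
    have h3 := Real.abs_cos_le_one (a * t)
    have h4 := Real.abs_sin_le_one (a * t)
    rw [hAf, hBg]
    have e : ε * f ε * Real.cos (a * t) + ε * g ε * Real.sin (a * t)
        = (f ε * Real.cos (a * t) + g ε * Real.sin (a * t)) * ε := by ring
    rw [e, abs_mul, abs_of_pos hε.1]
    refine mul_le_mul_of_nonneg_right ?_ hε.1.le
    refine (abs_add_le _ _).trans ?_
    rw [abs_mul, abs_mul]
    have h5 := mul_le_mul h1 h3 (abs_nonneg _) hK0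
    have h6 := mul_le_mul h2 h4 (abs_nonneg _) hL0
    linarith
  · have h := hAc.tendsto 0
    have e : A 0 = -(a * E / (a ^ 2 + 4 * lam ^ 2)) := by
      rw [hA, hDenom]
      ring_nf
    rw [e] at h
    exact h.mono_left nhdsWithin_le_nhds
  · have h := hBc.tendsto 0
    have e : B 0 = 2 * lam * E / (a ^ 2 + 4 * lam ^ 2) := by
      rw [hB, hDenom]
      ring_nf
    rw [e] at h
    exact h.mono_left nhdsWithin_le_nhds
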